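/- (First-order ε-optimum exponent when both hypotheses are mixed memoryless.) Let 𝒳 be a finite alphabet. Let the null hypothesis be the mixed memoryless source P_{X^n}(x) = ∫_Θ ∏_{i=1}^n P_θ(x_i) dw(θ) over a probability space (Θ, w) with measurable family {P_θ} of distributions on 𝒳. Let the alternative hypothesis be the mixed memoryless source P_{X̄^n}(x) = ∫_Σ ∏_{i=1}^n P̄_σ(x_i) dv(σ), where Σ is a compact topological probability space with Borel probability measure v, σ ↦ P̄_σ is continuous, and P̄_σ(x) > 0 for all σ ∈ Σ, x ∈ 𝒳. Let σ(·) be a function from distributions P on 𝒳 to Σ satisfying D(P‖P̄_{σ(P)}) = v-ess inf_σ D(P‖P̄_σ) for all P, where v-ess inf_σ f(σ) = sup{ β : v({σ : f(σ) < β}) = 0 }. Then for every ε with 0 ≤ ε < 1, B_ε(X‖X̄) = sup{ R ∈ ℝ : w({ θ : D(P_θ‖P̄_{σ(P_θ)}) < R }) ≤ ε }. -/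

import Mathlib

open scoped BigOperators
open MeasureTheory

/-- Probability of a set `A` under a distribution `P` on a finite type. -/
noncomputable def prob {α : Type*} [Fintype α] (P : α → ℝ) (A : Set α) : ℝ :=
  ∑ x, A.indicator P x

/-- Type I error probability `μ_n = Pr{X^n ∉ A_n}` of the acceptance regions `A`
for the general source `X`. -/
noncomputable def typeI {𝒳 : Type*} [Fintype 𝒳] (X : (n : ℕ) → (Fin n → 𝒳) → ℝ)
    (A : (n : ℕ) → Set (Fin n → 𝒳)) (n : ℕ) : ℝ :=
  prob (X n) ((A n)ᶜ)

/-- Type II error probability `λ_n = Pr{X̄^n ∈ A_n}` of the acceptance regions `A`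
for the general source `X̄`. -/
noncomputable def typeII {𝒳 : Type*} [Fintype 𝒳] (Xbar : (n : ℕ) → (Fin n → 𝒳) → ℝ)
    (A : (n : ℕ) → Set (Fin n → 𝒳)) (n : ℕ) : ℝ :=
  prob (Xbar n) (A n)

/-- `R` is `ε`-achievable: there are acceptance regions with
`limsup μ_n ≤ ε` and `liminf (1/n) log (1/λ_n) ≥ R`. -/
def EpsAchievable {𝒳 : Type*} [Fintype 𝒳] (X Xbar : (n : ℕ) → (Fin n → 𝒳) → ℝ)
    (ε R : ℝ) : Prop :=
  ∃ A : (n : ℕ) → Set (Fin n → 𝒳),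
    Filter.limsup (typeI X A) Filter.atTop ≤ ε ∧
    R ≤ Filter.liminf (fun n : ℕ => (1 / (n : ℝ)) * Real.log (1 / typeII Xbar A n))
      Filter.atTop

/-- The first-order `ε`-optimum exponent `B_ε(X‖X̄)`. -/
noncomputable def Beps {𝒳 : Type*} [Fintype 𝒳]
    (X Xbar : (n : ℕ) → (Fin n → 𝒳) → ℝ) (ε : ℝ) : ℝ :=
  sSup {R : ℝ | EpsAchievable X Xbar ε R}

/-- Kullback–Leibler divergence `D(P‖Q) = ∑_x P(x) log (P(x)/Q(x))` on a finite alphabet. -/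
noncomputable def KL {𝒳 : Type*} [Fintype 𝒳] (P Q : 𝒳 → ℝ) : ℝ :=
  ∑ x, P x * Real.log (P x / Q x)

/-!
Write `d(p)` for the essential infimum of `D(p‖P̄_σ)` over `σ`.

Achievability: accept the words whose empirical distribution `p` satisfies `d(p) ≥ r`. By the
method of types the type II error is at most `(n + 1) ^ |𝒳| * exp (-n r)`. On the simplex `d` is
lower semicontinuous, being the continuous function `∑ p log p` plus an essential infimum of linear
functions with nonnegative coefficients, so by the weak law of large numbers the component `P_θ` is
accepted with probability tending to one whenever `d(P_θ) > r`.

Converse: if `d(p) < r`, there is a neighbourhood of `p` and a set of `σ` of positive `v`-measure on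
which `∑ p' log (p / P̄_σ) < r` for every `p'` in the neighbourhood. A change of measure on this set
shows that a test with type II error at most `exp (-n r)` accepts the memoryless source `p` with
vanishing probability.

Both statements are integrated over `θ` by dominated convergence.
-/

open Filter Topology ProbabilityTheory

section Prob

variable {β : Type*} [Fintype β] {P Q : β → ℝ} {A B : Set β}

lemma prob_nonneg (hQ : ∀ x, 0 ≤ Q x) (A : Set β) : 0 ≤ prob Q A :=
  Finset.sum_nonneg fun x _ => Set.indicator_nonneg (fun y _ => hQ y) x

lemma prob_mono (hQ : ∀ x, 0 ≤ Q x) (hAB : A ⊆ B) : prob Q A ≤ prob Q B :=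
  Finset.sum_le_sum fun x _ => Set.indicator_le_indicator_of_subset hAB hQ x

lemma le_prob_of_mem (hQ : ∀ x, 0 ≤ Q x) {x : β} (hx : x ∈ A) : Q x ≤ prob Q A :=
  (Set.indicator_of_mem hx Q).symm.le.trans <|
    Finset.single_le_sum (f := A.indicator Q)
      (fun y _ => Set.indicator_nonneg (fun z _ => hQ z) y) (Finset.mem_univ x)

lemma prob_add_prob_compl (Q : β → ℝ) (A : Set β) : prob Q A + prob Q Aᶜ = ∑ x, Q x := by
  simp only [prob, ← Finset.sum_add_distrib, Set.indicator_self_add_compl_apply]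

lemma prob_iUnion_le {ι : Type*} [Fintype ι] (hQ : ∀ x, 0 ≤ Q x)
    (A : ι → Set β) : prob Q (⋃ i, A i) ≤ ∑ i, prob Q (A i) := by
  simp only [prob]
  rw [Finset.sum_comm]
  refine Finset.sum_le_sum fun x _ => Set.indicator_apply_le' (fun hx => ?_) fun _ => ?_
  · obtain ⟨i, hi⟩ := Set.mem_iUnion.1 hx
    exact (Set.indicator_of_mem hi Q).symm.le.trans <|
      Finset.single_le_sum (f := fun i => (A i).indicator Q x)
        (fun j _ => Set.indicator_nonneg (fun y _ => hQ y) x) (Finset.mem_univ i)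
  · exact Finset.sum_nonneg fun i _ => Set.indicator_nonneg (fun y _ => hQ y) x

lemma prob_le_mul_sum {c : ℝ} (hc : 0 ≤ c) (hQ : ∀ x, 0 ≤ Q x)
    (h : ∀ x ∈ A, P x ≤ c * Q x) : prob P A ≤ c * ∑ x, Q x := by
  rw [Finset.mul_sum]
  exact Finset.sum_le_sum fun x _ =>
    Set.indicator_apply_le' (h x) fun _ => mul_nonneg hc (hQ x)

lemma prob_le_prob_add_mul_prob {c : ℝ} (hc : 0 ≤ c) (hP : ∀ x, 0 ≤ P x) (hQ : ∀ x, 0 ≤ Q x)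
    (h : ∀ x ∉ B, P x ≤ c * Q x) : prob P A ≤ prob P B + c * prob Q A := by
  simp only [prob, Finset.mul_sum, ← Finset.sum_add_distrib]
  refine Finset.sum_le_sum fun x _ => Set.indicator_apply_le' (fun hxA => ?_) fun hxA => ?_
  · rw [Set.indicator_of_mem hxA]
    by_cases hxB : x ∈ B
    · rw [Set.indicator_of_mem hxB]
      exact le_add_of_nonneg_right (mul_nonneg hc (hQ x))
    · rw [Set.indicator_of_notMem hxB, zero_add]
      exact h x hxB
  · rw [Set.indicator_of_notMem hxA, mul_zero, add_zero]
    exact Set.indicator_nonneg (fun y _ => hP y) x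

end Prob

section ProductDist

variable {𝒳 : Type*}

/-- The memoryless source with letter distribution `p`: the `n`-fold product of `p`. -/
noncomputable def productDist (p : 𝒳 → ℝ) (n : ℕ) (x : Fin n → 𝒳) : ℝ :=
  ∏ i, p (x i)

lemma productDist_nonneg {p : 𝒳 → ℝ} (hp : ∀ a, 0 ≤ p a) {n : ℕ} (x : Fin n → 𝒳) :
    0 ≤ productDist p n x :=
  Finset.prod_nonneg fun i _ => hp (x i)

lemma productDist_eq_exp_mul {p q : 𝒳 → ℝ} {n : ℕ} {x : Fin n → 𝒳} (hp : ∀ i, 0 < p (x i))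
    (hq : ∀ i, 0 < q (x i)) :
    productDist p n x = Real.exp (∑ i, Real.log (p (x i) / q (x i))) * productDist q n x := by
  rw [Real.exp_sum, productDist, productDist, ← Finset.prod_mul_distrib]
  refine Finset.prod_congr rfl fun i _ => ?_
  rw [Real.exp_log (div_pos (hp i) (hq i)), div_mul_cancel₀ _ (hq i).ne']

variable [Fintype 𝒳] {p : 𝒳 → ℝ}

lemma sum_productDist (hp : ∑ a, p a = 1) (n : ℕ) : ∑ x, productDist p n x = 1 := by
  have h := Finset.prod_univ_sum (fun _ : Fin n => (Finset.univ : Finset 𝒳)) fun _ a => p a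
  simpa only [productDist, hp, Finset.prod_const_one, Fintype.piFinset_univ] using h.symm

lemma productDist_le_one (hp : p ∈ stdSimplex ℝ 𝒳) {n : ℕ} (x : Fin n → 𝒳) :
    productDist p n x ≤ 1 :=
  (Finset.single_le_sum (fun y _ => productDist_nonneg hp.1 y) (Finset.mem_univ x)).trans_eq
    (sum_productDist hp.2 n)

lemma prob_productDist_compl (hp : ∑ a, p a = 1) {n : ℕ} (A : Set (Fin n → 𝒳)) :
    prob (productDist p n) Aᶜ = 1 - prob (productDist p n) A := by
  rw [← sum_productDist hp n, ← prob_add_prob_compl (productDist p n) A, add_sub_cancel_left]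

lemma prob_productDist_le_one (hp : p ∈ stdSimplex ℝ 𝒳) {n : ℕ} (A : Set (Fin n → 𝒳)) :
    prob (productDist p n) A ≤ 1 := by
  have h := prob_nonneg (productDist_nonneg hp.1) Aᶜ
  rw [prob_productDist_compl hp.2] at h
  linarith

end ProductDist

section Empirical

variable {𝒳 : Type*} {n : ℕ}

open Classical in
/-- The empirical distribution (type) of the word `x`: the relative frequency of each letter.
For the empty word it is `0`, which is not a probability distribution. -/
noncomputable def empirical (x : Fin n → 𝒳) (a : 𝒳) : ℝ :=
  (Finset.card {i | x i = a} : ℝ) / n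

lemma empirical_nonneg (x : Fin n → 𝒳) (a : 𝒳) : 0 ≤ empirical x a :=
  div_nonneg (Nat.cast_nonneg _) (Nat.cast_nonneg _)

lemma empirical_apply_pos (x : Fin n → 𝒳) (i : Fin n) : 0 < empirical x (x i) := by
  classical
  refine div_pos (Nat.cast_pos.2 (Finset.card_pos.2 ⟨i, ?_⟩)) (Nat.cast_pos.2 i.pos)
  simp

variable [Fintype 𝒳]

lemma sum_empirical_mul (x : Fin n → 𝒳) (g : 𝒳 → ℝ) :
    ∑ a, empirical x a * g a = (∑ i, g (x i)) / n := by
  classical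
  rw [← Finset.sum_fiberwise Finset.univ x fun i => g (x i), Finset.sum_div]
  refine Finset.sum_congr rfl fun a _ => ?_
  have hconst : ∀ i ∈ Finset.univ.filter fun i => x i = a, g (x i) = g a := fun i hi => by
    rw [(Finset.mem_filter.1 hi).2]
  rw [Finset.sum_congr rfl hconst, Finset.sum_const, nsmul_eq_mul, empirical, div_mul_eq_mul_div]

lemma empirical_mem_stdSimplex (hn : n ≠ 0) (x : Fin n → 𝒳) : empirical x ∈ stdSimplex ℝ 𝒳 := by
  refine ⟨empirical_nonneg x, ?_⟩
  have h := sum_empirical_mul x fun _ => 1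
  simpa [hn] using h

lemma productDist_eq_exp_sum_empirical_mul {p q : 𝒳 → ℝ} (hn : n ≠ 0) {x : Fin n → 𝒳}
    (hp : ∀ i, 0 < p (x i)) (hq : ∀ i, 0 < q (x i)) :
    productDist p n x =
      Real.exp (n * ∑ a, empirical x a * Real.log (p a / q a)) * productDist q n x := by
  rw [sum_empirical_mul, mul_div_cancel₀ _ (Nat.cast_ne_zero.2 hn)]
  exact productDist_eq_exp_mul hp hq

lemma card_image_empirical_le [DecidableEq (𝒳 → ℝ)] :
    (Finset.univ.image (empirical : (Fin n → 𝒳) → 𝒳 → ℝ)).card ≤ (n + 1) ^ Fintype.card 𝒳 := by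
  classical
  let frequencies : Finset ℝ := (Finset.range (n + 1)).image fun k : ℕ => (k : ℝ) / n
  have hsubset : Finset.univ.image (empirical : (Fin n → 𝒳) → 𝒳 → ℝ) ⊆
      Fintype.piFinset fun _ => frequencies := by
    refine Finset.image_subset_iff.2 fun x _ => Fintype.mem_piFinset.2 fun a => ?_
    refine Finset.mem_image.2 ⟨_, Finset.mem_range.2 (Nat.lt_succ_of_le ?_), rfl⟩
    exact (Finset.card_le_univ _).trans_eq (Fintype.card_fin n)
  calc _ ≤ (Fintype.piFinset fun _ : 𝒳 => frequencies).card := Finset.card_le_card hsubset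
    _ = frequencies.card ^ Fintype.card 𝒳 := by
      rw [Fintype.card_piFinset, Finset.prod_const, Finset.card_univ]
    _ ≤ (n + 1) ^ Fintype.card 𝒳 :=
      Nat.pow_le_pow_left (Finset.card_image_le.trans_eq (Finset.card_range _)) _

-- On each type class the summand is a product distribution, so the sum counts the types.
lemma sum_productDist_empirical_le (hn : n ≠ 0) :
    ∑ x : Fin n → 𝒳, productDist (empirical x) n x ≤ ((n : ℝ) + 1) ^ Fintype.card 𝒳 := by
  classical
  have hclass : ∀ q ∈ Finset.univ.image (empirical : (Fin n → 𝒳) → 𝒳 → ℝ),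
      ∑ x with empirical x = q, productDist (empirical x) n x ≤ 1 := by
    intro q hq
    obtain ⟨y, -, rfl⟩ := Finset.mem_image.1 hq
    have hy := empirical_mem_stdSimplex hn y
    calc ∑ x with empirical x = empirical y, productDist (empirical x) n x
        = ∑ x with empirical x = empirical y, productDist (empirical y) n x :=
          Finset.sum_congr rfl fun x hx => by rw [(Finset.mem_filter.1 hx).2]
      _ ≤ ∑ x, productDist (empirical y) n x :=
          Finset.sum_le_sum_of_subset_of_nonneg (Finset.subset_univ _)
            fun x _ _ => productDist_nonneg hy.1 x
      _ = 1 := sum_productDist hy.2 n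
  rw [← Finset.sum_fiberwise_of_maps_to fun x _ =>
    Finset.mem_image_of_mem (empirical : (Fin n → 𝒳) → 𝒳 → ℝ) (Finset.mem_univ x)]
  calc _ ≤ ((Finset.univ.image (empirical : (Fin n → 𝒳) → 𝒳 → ℝ)).card : ℝ) := by
        simpa using Finset.sum_le_sum hclass
    _ ≤ ((n : ℝ) + 1) ^ Fintype.card 𝒳 := by exact_mod_cast card_image_empirical_le

end Empirical

section WeakLaw

lemma measureReal_pi_abs_average_sub_integral_ge_le {Ω : Type*} [MeasurableSpace Ω]
    {μ : Measure Ω} [IsProbabilityMeasure μ] {f : Ω → ℝ} (hf : MemLp f 2 μ) {n : ℕ} (hn : n ≠ 0)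
    {δ : ℝ} (hδ : 0 < δ) :
    (Measure.pi fun _ : Fin n => μ).real {x | δ ≤ |(∑ i, f (x i)) / n - ∫ ω, f ω ∂μ|} ≤
      Var[f; μ] / δ ^ 2 / n := by
  have hn0 : (0 : ℝ) < n := by positivity
  set ν := Measure.pi fun _ : Fin n => μ
  set S : (Fin n → Ω) → ℝ := ∑ i, fun x => f (x i) with hS
  have hfi (i : Fin n) : MemLp (fun x : Fin n → Ω => f (x i)) 2 ν :=
    hf.comp_measurePreserving (measurePreserving_eval (fun _ => μ) i)
  have hS_memLp : MemLp S 2 ν := memLp_finsetSum' _ fun i _ => hfi i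
  have hS_integral : ∫ x, S x ∂ν = n * ∫ ω, f ω ∂μ := by
    simp only [hS, Finset.sum_apply]
    rw [integral_finsetSum _ fun i _ => (hfi i).integrable one_le_two]
    simp [ν, integral_comp_eval (μ := fun _ : Fin n => μ) hf.aestronglyMeasurable]
  have hS_var : Var[S; ν] = n * Var[f; μ] := by
    simp [S, ν, variance_sum_pi fun _ : Fin n => hf]
  have hset : {x : Fin n → Ω | δ ≤ |(∑ i, f (x i)) / n - ∫ ω, f ω ∂μ|} =
      {x | n * δ ≤ |S x - ∫ y, S y ∂ν|} := by
    ext x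
    have hscale : S x - ∫ y, S y ∂ν = n * ((∑ i, f (x i)) / n - ∫ ω, f ω ∂μ) := by
      rw [hS_integral, hS, Finset.sum_apply, mul_sub, mul_div_cancel₀ _ hn0.ne']
    rw [Set.mem_ofPred_eq, Set.mem_ofPred_eq, hscale, abs_mul, Nat.abs_cast,
      mul_le_mul_iff_right₀ hn0]
  rw [hset]
  calc ν.real {x | n * δ ≤ |S x - ∫ y, S y ∂ν|} ≤ Var[S; ν] / (n * δ) ^ 2 :=
        ENNReal.toReal_le_of_le_ofReal (div_nonneg (variance_nonneg _ _) (sq_nonneg _))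
          (meas_ge_le_variance_div_sq hS_memLp (by positivity))
    _ = Var[f; μ] / δ ^ 2 / n := by
        rw [hS_var]
        field_simp

variable {𝒳 : Type*} [Fintype 𝒳] {p : 𝒳 → ℝ}

lemma exists_isProbabilityMeasure_real_singleton_eq [MeasurableSpace 𝒳]
    [MeasurableSingletonClass 𝒳] (hp : p ∈ stdSimplex ℝ 𝒳) :
    ∃ μ : Measure 𝒳, IsProbabilityMeasure μ ∧ ∀ a, μ.real {a} = p a := by
  have hsum : ∑ a, ENNReal.ofReal (p a) = 1 := by
    rw [← ENNReal.ofReal_sum_of_nonneg fun a _ => hp.1 a, hp.2, ENNReal.ofReal_one]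
  refine ⟨(PMF.ofFintype _ hsum).toMeasure, inferInstance, fun a => ?_⟩
  rw [Measure.real, PMF.toMeasure_apply_singleton _ _ (measurableSet_singleton a),
    PMF.ofFintype_apply, ENNReal.toReal_ofReal (hp.1 a)]

lemma prob_productDist_eq_measureReal_pi [MeasurableSpace 𝒳] [MeasurableSingletonClass 𝒳]
    {μ : Measure 𝒳} [IsProbabilityMeasure μ] (hμ : ∀ a, μ.real {a} = p a) {n : ℕ}
    (A : Set (Fin n → 𝒳)) :
    prob (productDist p n) A = (Measure.pi fun _ : Fin n => μ).real A := by
  classical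
  have hsingleton (x : Fin n → 𝒳) :
      (Measure.pi fun _ : Fin n => μ).real {x} = productDist p n x := by
    simp [Measure.real, productDist, ← hμ, ENNReal.toReal_prod]
  have hA : ((Finset.univ.filter (· ∈ A) : Finset (Fin n → 𝒳)) : Set (Fin n → 𝒳)) = A := by simp
  conv_rhs => rw [← hA, ← sum_measureReal_singleton]
  simp only [hsingleton, prob, Set.indicator_apply, Finset.sum_filter]

lemma tendsto_prob_productDist_abs_empirical_sub_ge (hp : p ∈ stdSimplex ℝ 𝒳) (a : 𝒳) {δ : ℝ}
    (hδ : 0 < δ) :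
    Tendsto (fun n => prob (productDist p n) {x | δ ≤ |empirical x a - p a|}) atTop (𝓝 0) := by
  classical
  let _ : MeasurableSpace 𝒳 := ⊤
  obtain ⟨μ, _, hμ⟩ := exists_isProbabilityMeasure_real_singleton_eq hp
  set f : 𝒳 → ℝ := Pi.single a 1
  have hf : MemLp f 2 μ := .of_discrete
  have hmean : ∫ b, f b ∂μ = p a := by simp [f, integral_fintype, hμ, Pi.single_apply]
  have hfreq {n : ℕ} (x : Fin n → 𝒳) : (∑ i, f (x i)) / n = empirical x a := by
    rw [← sum_empirical_mul]
    simp [f, Pi.single_apply]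
  refine squeeze_zero' (.of_forall fun n => prob_nonneg (productDist_nonneg hp.1) _)
    ((eventually_ne_atTop 0).mono fun n hn => ?_)
    (tendsto_const_div_atTop_nhds_zero_nat (Var[f; μ] / δ ^ 2))
  rw [prob_productDist_eq_measureReal_pi hμ]
  simpa only [hmean, hfreq] using measureReal_pi_abs_average_sub_integral_ge_le hf hn hδ

lemma tendsto_prob_productDist_empirical_notMem (hp : p ∈ stdSimplex ℝ 𝒳) {U : Set (𝒳 → ℝ)}
    (hU : U ∈ 𝓝[stdSimplex ℝ 𝒳] p) :
    Tendsto (fun n => prob (productDist p n) {x | empirical x ∉ U}) atTop (𝓝 0) := by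
  obtain ⟨δ, hδ, hball⟩ := Metric.mem_nhdsWithin_iff.1 hU
  have hsubset {n : ℕ} (hn : n ≠ 0) : {x : Fin n → 𝒳 | empirical x ∉ U} ⊆
      ⋃ a, {x | δ ≤ |empirical x a - p a|} := by
    intro x hx
    by_contra hclose
    simp only [Set.mem_iUnion, Set.mem_ofPred_eq, not_exists, not_le] at hclose
    exact hx (hball ⟨(dist_pi_lt_iff hδ).2 hclose, empirical_mem_stdSimplex hn x⟩)
  have hlim := tendsto_finsetSum Finset.univ fun a _ =>
    tendsto_prob_productDist_abs_empirical_sub_ge hp a hδ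
  rw [Finset.sum_const_zero] at hlim
  refine squeeze_zero' (.of_forall fun n => prob_nonneg (productDist_nonneg hp.1) _)
    ((eventually_ne_atTop 0).mono fun n hn => ?_) hlim
  exact (prob_mono (productDist_nonneg hp.1) (hsubset hn)).trans
    (prob_iUnion_le (productDist_nonneg hp.1) _)

end WeakLaw

section MixedSource

variable {𝒳 Ω : Type*} [MeasurableSpace Ω] {μ : Measure Ω} {Q : Ω → 𝒳 → ℝ} {n : ℕ}

/-- The mixed memoryless source: the mixture under `μ` of the memoryless sources with letter
distributions `Q ω`. -/
noncomputable def mixedSource (μ : Measure Ω) (Q : Ω → 𝒳 → ℝ) (n : ℕ) (x : Fin n → 𝒳) : ℝ :=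
  ∫ ω, productDist (Q ω) n x ∂μ

lemma mixedSource_nonneg (hQ : ∀ ω a, 0 ≤ Q ω a) (x : Fin n → 𝒳) : 0 ≤ mixedSource μ Q n x :=
  integral_nonneg fun ω => productDist_nonneg (hQ ω) x

lemma measurable_productDist (hQm : Measurable Q) (x : Fin n → 𝒳) :
    Measurable fun ω => productDist (Q ω) n x :=
  Finset.measurable_prod _ fun i _ => (measurable_pi_apply (x i)).comp hQm

variable [Fintype 𝒳]

lemma measurable_prob_productDist (hQm : Measurable Q) (A : Set (Fin n → 𝒳)) :
    Measurable fun ω => prob (productDist (Q ω) n) A := by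
  classical
  simp only [prob, Set.indicator_apply]
  exact Finset.measurable_sum _ fun x _ =>
    Measurable.ite (.const _) (measurable_productDist hQm x) measurable_const

section Finite

variable [IsFiniteMeasure μ]

lemma integrable_productDist (hQm : Measurable Q) (hQ : ∀ ω, Q ω ∈ stdSimplex ℝ 𝒳)
    (x : Fin n → 𝒳) : Integrable (fun ω => productDist (Q ω) n x) μ :=
  .of_mem_Icc 0 1 (measurable_productDist hQm x).aemeasurable <|
    .of_forall fun ω => ⟨productDist_nonneg (hQ ω).1 x, productDist_le_one (hQ ω) x⟩

lemma integrable_prob_productDist (hQm : Measurable Q) (hQ : ∀ ω, Q ω ∈ stdSimplex ℝ 𝒳)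
    (A : Set (Fin n → 𝒳)) : Integrable (fun ω => prob (productDist (Q ω) n) A) μ :=
  .of_mem_Icc 0 1 (measurable_prob_productDist hQm A).aemeasurable <|
    .of_forall fun ω =>
      ⟨prob_nonneg (productDist_nonneg (hQ ω).1) A, prob_productDist_le_one (hQ ω) A⟩

lemma prob_mixedSource (hQm : Measurable Q) (hQ : ∀ ω, Q ω ∈ stdSimplex ℝ 𝒳)
    (A : Set (Fin n → 𝒳)) :
    prob (mixedSource μ Q n) A = ∫ ω, prob (productDist (Q ω) n) A ∂μ := by
  classical
  simp only [prob, Set.indicator_apply]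
  rw [integral_finsetSum]
  · refine Finset.sum_congr rfl fun x _ => ?_
    split_ifs
    · rfl
    · rw [integral_zero]
  · intro x _
    split_ifs
    · exact integrable_productDist hQm hQ x
    · exact integrable_zero _ _ _

lemma prod_mem_Icc_of_mem_stdSimplex {p : 𝒳 → ℝ} (hp : p ∈ stdSimplex ℝ 𝒳) (s : Finset 𝒳) :
    ∏ a ∈ s, p a ∈ Set.Icc 0 1 :=
  ⟨Finset.prod_nonneg fun a _ => hp.1 a,
    Finset.prod_le_one (fun a _ => hp.1 a) fun a _ => (mem_Icc_of_mem_stdSimplex hp a).2⟩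

lemma integrable_prod_univ (hQm : Measurable Q) (hQ : ∀ ω, Q ω ∈ stdSimplex ℝ 𝒳) :
    Integrable (fun ω => ∏ a, Q ω a) μ :=
  .of_mem_Icc 0 1
    (Finset.measurable_prod _ fun a _ => (measurable_pi_apply a).comp hQm).aemeasurable <|
    .of_forall fun ω => prod_mem_Icc_of_mem_stdSimplex (hQ ω) _

end Finite

variable [IsProbabilityMeasure μ]

lemma prob_mixedSource_compl (hQm : Measurable Q) (hQ : ∀ ω, Q ω ∈ stdSimplex ℝ 𝒳)
    (A : Set (Fin n → 𝒳)) :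
    prob (mixedSource μ Q n) Aᶜ = 1 - prob (mixedSource μ Q n) A := by
  have h : ∀ ω, prob (productDist (Q ω) n) Aᶜ = 1 - prob (productDist (Q ω) n) A :=
    fun ω => prob_productDist_compl (hQ ω).2 A
  simp only [prob_mixedSource hQm hQ, h]
  rw [integral_sub (integrable_const _) (integrable_prob_productDist hQm hQ A)]
  simp

lemma prob_mixedSource_le_one (hQm : Measurable Q) (hQ : ∀ ω, Q ω ∈ stdSimplex ℝ 𝒳)
    (A : Set (Fin n → 𝒳)) : prob (mixedSource μ Q n) A ≤ 1 := by
  have h := prob_nonneg (mixedSource_nonneg (μ := μ) fun ω => (hQ ω).1) Aᶜ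
  rw [prob_mixedSource_compl hQm hQ] at h
  linarith

lemma integral_prod_univ_le_one (hQm : Measurable Q) (hQ : ∀ ω, Q ω ∈ stdSimplex ℝ 𝒳) :
    ∫ ω, ∏ a, Q ω a ∂μ ≤ 1 := by
  have h := integral_mono (integrable_prod_univ hQm hQ) (integrable_const (μ := μ) (1 : ℝ))
    fun ω => (prod_mem_Icc_of_mem_stdSimplex (hQ ω) _).2
  simpa using h

lemma integral_prod_univ_pos (hQm : Measurable Q) (hQ : ∀ ω, Q ω ∈ stdSimplex ℝ 𝒳)
    (hpos : ∀ ω a, 0 < Q ω a) : 0 < ∫ ω, ∏ a, Q ω a ∂μ := by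
  have hprod : ∀ ω, 0 < ∏ a, Q ω a := fun ω => Finset.prod_pos fun a _ => hpos ω a
  refine (integral_pos_iff_support_of_nonneg (fun ω => (hprod ω).le)
    (integrable_prod_univ hQm hQ)).2 ?_
  have hsupport : (Function.support fun ω => ∏ a, Q ω a) = Set.univ :=
    Set.eq_univ_of_forall fun ω => (hprod ω).ne'
  rw [hsupport, measure_univ]
  exact one_pos

-- Each letter has probability at least the product of all of them; conclude by Jensen.
lemma integral_prod_univ_pow_le_mixedSource (hQm : Measurable Q)
    (hQ : ∀ ω, Q ω ∈ stdSimplex ℝ 𝒳) (x : Fin n → 𝒳) :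
    (∫ ω, ∏ a, Q ω a ∂μ) ^ n ≤ mixedSource μ Q n x := by
  classical
  have hnonneg : ∀ ω, 0 ≤ ∏ a, Q ω a := fun ω => (prod_mem_Icc_of_mem_stdSimplex (hQ ω) _).1
  have hletter : ∀ ω b, ∏ a, Q ω a ≤ Q ω b := fun ω b => by
    rw [← Finset.mul_prod_erase _ _ (Finset.mem_univ b)]
    exact mul_le_of_le_one_right ((hQ ω).1 b) (prod_mem_Icc_of_mem_stdSimplex (hQ ω) _).2
  have hpow : ∀ ω, (∏ a, Q ω a) ^ n ≤ productDist (Q ω) n x := fun ω => by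
    simpa [productDist] using Finset.prod_le_prod (s := (Finset.univ : Finset (Fin n)))
      (fun _ _ => hnonneg ω) fun i _ => hletter ω (x i)
  have hint : Integrable (fun ω => (∏ a, Q ω a) ^ n) μ :=
    (integrable_productDist hQm hQ x).mono'
      ((integrable_prod_univ hQm hQ).aestronglyMeasurable.pow n) <| .of_forall fun ω => by
        rw [Real.norm_of_nonneg (pow_nonneg (hnonneg ω) n)]
        exact hpow ω
  calc (∫ ω, ∏ a, Q ω a ∂μ) ^ n ≤ ∫ ω, (∏ a, Q ω a) ^ n ∂μ :=
        (convexOn_pow n).map_integral_le (continuous_pow n).continuousOn isClosed_Ici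
          (.of_forall hnonneg) (integrable_prod_univ hQm hQ) hint
    _ ≤ mixedSource μ Q n x := integral_mono hint (integrable_productDist hQm hQ x) hpow

end MixedSource

section TypeIIExponent

variable {𝒳 : Type*} [Fintype 𝒳] {Xbar : (n : ℕ) → (Fin n → 𝒳) → ℝ}
  {A : (n : ℕ) → Set (Fin n → 𝒳)} {n : ℕ}

/-- The exponent `(1/n) log (1/λ_n)` of the type II error. It is `0` when `λ_n = 0` or `n = 0`,
because `x / 0 = 0` and `Real.log 0 = 0`. -/
noncomputable def typeIIExponent (Xbar : (n : ℕ) → (Fin n → 𝒳) → ℝ)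
    (A : (n : ℕ) → Set (Fin n → 𝒳)) (n : ℕ) : ℝ :=
  1 / (n : ℝ) * Real.log (1 / typeII Xbar A n)

lemma le_typeIIExponent_iff (hn : n ≠ 0) (hA : 0 < typeII Xbar A n) (r : ℝ) :
    r ≤ typeIIExponent Xbar A n ↔ typeII Xbar A n ≤ Real.exp (-(n * r)) := by
  have hn0 : (0 : ℝ) < n := by positivity
  rw [typeIIExponent, one_div_mul_eq_div, le_div_iff₀ hn0, one_div, Real.log_inv,
    ← Real.log_le_iff_le_exp hA, le_neg, mul_comm r]

lemma typeII_le_exp_of_le_typeIIExponent (hn : n ≠ 0) (hA : 0 ≤ typeII Xbar A n) {r : ℝ}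
    (hr : r ≤ typeIIExponent Xbar A n) : typeII Xbar A n ≤ Real.exp (-(n * r)) := by
  rcases hA.eq_or_lt with hzero | hpos
  · exact hzero ▸ (Real.exp_pos _).le
  · exact (le_typeIIExponent_iff hn hpos r).1 hr

variable {Λ : Type*} [MeasurableSpace Λ] {v : Measure Λ} [IsProbabilityMeasure v] {Q : Λ → 𝒳 → ℝ}

lemma typeIIExponent_mixedSource_nonneg (hQm : Measurable Q) (hQ : ∀ σ, Q σ ∈ stdSimplex ℝ 𝒳)
    (A : (n : ℕ) → Set (Fin n → 𝒳)) (n : ℕ) : 0 ≤ typeIIExponent (mixedSource v Q) A n := by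
  rw [typeIIExponent, one_div (typeII _ _ _), Real.log_inv]
  exact mul_nonneg (by positivity) <| neg_nonneg.2 <|
    Real.log_nonpos (prob_nonneg (mixedSource_nonneg fun σ => (hQ σ).1) _)
      (prob_mixedSource_le_one hQm hQ _)

lemma integral_prod_univ_pow_le_typeII (hQm : Measurable Q) (hQ : ∀ σ, Q σ ∈ stdSimplex ℝ 𝒳)
    (hA : (A n).Nonempty) : (∫ σ, ∏ a, Q σ a ∂v) ^ n ≤ typeII (mixedSource v Q) A n := by
  obtain ⟨x, hx⟩ := hA
  exact (integral_prod_univ_pow_le_mixedSource hQm hQ x).trans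
    (le_prob_of_mem (mixedSource_nonneg fun σ => (hQ σ).1) hx)

lemma typeII_mixedSource_pos (hQm : Measurable Q) (hQ : ∀ σ, Q σ ∈ stdSimplex ℝ 𝒳)
    (hpos : ∀ σ a, 0 < Q σ a) (hA : (A n).Nonempty) : 0 < typeII (mixedSource v Q) A n :=
  (pow_pos (integral_prod_univ_pos hQm hQ hpos) n).trans_le
    (integral_prod_univ_pow_le_typeII hQm hQ hA)

lemma typeIIExponent_mixedSource_le (hQm : Measurable Q) (hQ : ∀ σ, Q σ ∈ stdSimplex ℝ 𝒳)
    (hpos : ∀ σ a, 0 < Q σ a) (A : (n : ℕ) → Set (Fin n → 𝒳)) (n : ℕ) :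
    typeIIExponent (mixedSource v Q) A n ≤ -Real.log (∫ σ, ∏ a, Q σ a ∂v) := by
  have hc := integral_prod_univ_pos (μ := v) hQm hQ hpos
  have hlog : Real.log (∫ σ, ∏ a, Q σ a ∂v) ≤ 0 :=
    Real.log_nonpos hc.le (integral_prod_univ_le_one hQm hQ)
  rcases n.eq_zero_or_pos with rfl | hn
  · simpa [typeIIExponent] using hlog
  rcases (A n).eq_empty_or_nonempty with hempty | hne
  · simpa [typeIIExponent, typeII, prob, hempty] using hlog
  rw [typeIIExponent, one_div_mul_eq_div, div_le_iff₀ (by positivity), one_div, Real.log_inv,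
    neg_mul, neg_le_neg_iff, mul_comm, ← Real.log_pow]
  exact Real.log_le_log (pow_pos hc n) (integral_prod_univ_pow_le_typeII hQm hQ hne)

end TypeIIExponent

section EssInfKL

variable {𝒳 : Type*} [Fintype 𝒳] {p p₀ q : 𝒳 → ℝ}

/-- The negative Shannon entropy `∑ p log p`, the convex part of the divergence. -/
noncomputable def negEntropy (p : 𝒳 → ℝ) : ℝ :=
  ∑ a, p a * Real.log (p a)

lemma continuous_negEntropy : Continuous (negEntropy : (𝒳 → ℝ) → ℝ) :=
  continuous_finsetSum _ fun a _ => Real.continuous_mul_log.comp (continuous_apply a)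

lemma KL_eq_negEntropy_add (hq : ∀ a, 0 < q a) :
    KL p q = negEntropy p + ∑ a, p a * -Real.log (q a) := by
  rw [KL, negEntropy, ← Finset.sum_add_distrib]
  refine Finset.sum_congr rfl fun a _ => ?_
  rcases eq_or_ne (p a) 0 with ha | ha
  · simp [ha]
  · rw [Real.log_div ha (hq a).ne']
    ring

lemma KL_nonneg (hp : ∀ a, 0 ≤ p a) (hq : ∀ a, 0 < q a) (hqp : ∑ a, q a ≤ ∑ a, p a) :
    0 ≤ KL p q := by
  have hterm : ∀ a, p a - q a ≤ p a * Real.log (p a / q a) := fun a => by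
    rcases (hp a).eq_or_lt with ha | ha
    · simp [← ha, (hq a).le]
    · calc p a - q a = p a * (1 - (p a / q a)⁻¹) := by field_simp
        _ ≤ p a * Real.log (p a / q a) :=
          mul_le_mul_of_nonneg_left (Real.one_sub_inv_le_log_of_pos (div_pos ha (hq a))) ha.le
  calc 0 ≤ ∑ a, (p a - q a) := by rwa [Finset.sum_sub_distrib, sub_nonneg]
    _ ≤ KL p q := Finset.sum_le_sum fun a _ => hterm a

lemma isCoboundedUnder_ge_ae {Λ : Type*} [MeasurableSpace Λ] {v : Measure Λ} [NeZero v]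
    (f : Λ → ℝ) : IsCoboundedUnder (· ≥ ·) (ae v) f := by
  have hcover : ⋃ N : ℕ, {σ | f σ ≤ N} = Set.univ :=
    Set.eq_univ_of_forall fun σ => Set.mem_iUnion.2 (exists_nat_ge (f σ))
  obtain ⟨N, hN⟩ := exists_measure_pos_of_not_measure_iUnion_null (μ := v) <| by
    rw [hcover]
    exact Measure.measure_univ_ne_zero.2 (NeZero.ne v)
  exact .of_frequently_le (frequently_ae_iff.2 hN.ne')

variable {Λ : Type*} [MeasurableSpace Λ] {v : Measure Λ} {Q : Λ → 𝒳 → ℝ}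

/-- The `v`-essential infimum of the divergences `D(p‖Q σ)`: the exponent of the type II error
against the mixture of the `Q σ` when the null hypothesis is memoryless with distribution `p`. -/
noncomputable def essInfKL (v : Measure Λ) (Q : Λ → 𝒳 → ℝ) (p : 𝒳 → ℝ) : ℝ :=
  essInf (fun σ => KL p (Q σ)) v

lemma ae_essInfKL_le (hQ : ∀ σ, Q σ ∈ stdSimplex ℝ 𝒳) (hpos : ∀ σ a, 0 < Q σ a)
    (hp : p ∈ stdSimplex ℝ 𝒳) : ∀ᵐ σ ∂v, essInfKL v Q p ≤ KL p (Q σ) :=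
  ae_essInf_le <| isBoundedUnder_of
    ⟨0, fun σ => KL_nonneg hp.1 (hpos σ) ((hQ σ).2.trans hp.2.symm).le⟩

variable [NeZero v]

lemma le_essInfKL {r : ℝ} (h : ∀ᵐ σ ∂v, r ≤ KL p (Q σ)) : r ≤ essInfKL v Q p :=
  le_essInf_of_ae_le r h (isCoboundedUnder_ge_ae _)

lemma essInfKL_nonneg (hQ : ∀ σ, Q σ ∈ stdSimplex ℝ 𝒳) (hpos : ∀ σ a, 0 < Q σ a)
    (hp : p ∈ stdSimplex ℝ 𝒳) : 0 ≤ essInfKL v Q p :=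
  le_essInfKL <| .of_forall fun σ => KL_nonneg hp.1 (hpos σ) ((hQ σ).2.trans hp.2.symm).le

lemma measure_KL_lt_ne_zero {r : ℝ} (h : essInfKL v Q p < r) : v {σ | KL p (Q σ) < r} ≠ 0 :=
  frequently_ae_iff.1 (frequently_lt_of_liminf_lt (isCoboundedUnder_ge_ae _) h)

-- The cross entropy `-∑ p log q` is linear in `p` with nonnegative coefficients.
lemma negEntropy_add_mul_le_essInfKL (hQ : ∀ σ, Q σ ∈ stdSimplex ℝ 𝒳) (hpos : ∀ σ a, 0 < Q σ a)
    (hp₀ : p₀ ∈ stdSimplex ℝ 𝒳) {t : ℝ} (ht : 0 ≤ t) (hle : ∀ a, t * p₀ a ≤ p a) :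
    negEntropy p + t * (essInfKL v Q p₀ - negEntropy p₀) ≤ essInfKL v Q p := by
  refine le_essInfKL ((ae_essInfKL_le hQ hpos hp₀).mono fun σ hσ => ?_)
  rw [KL_eq_negEntropy_add (hpos σ), ← sub_le_iff_le_add'] at hσ
  rw [KL_eq_negEntropy_add (hpos σ), add_le_add_iff_left]
  calc t * (essInfKL v Q p₀ - negEntropy p₀) ≤ t * ∑ a, p₀ a * -Real.log (Q σ a) :=
        mul_le_mul_of_nonneg_left hσ ht
    _ = ∑ a, t * p₀ a * -Real.log (Q σ a) := by simp only [Finset.mul_sum, mul_assoc]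
    _ ≤ ∑ a, p a * -Real.log (Q σ a) := Finset.sum_le_sum fun a _ =>
        mul_le_mul_of_nonneg_right (hle a) <| neg_nonneg.2 <|
          Real.log_nonpos (hpos σ a).le (mem_Icc_of_mem_stdSimplex (hQ σ) a).2

lemma eventually_forall_mul_le_of_lt_one (hp₀ : p₀ ∈ stdSimplex ℝ 𝒳) {t : ℝ} (ht : t < 1) :
    ∀ᶠ p in 𝓝[stdSimplex ℝ 𝒳] p₀, ∀ a, t * p₀ a ≤ p a := by
  refine eventually_all.2 fun a => ?_
  rcases (hp₀.1 a).eq_or_lt with ha | ha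
  · filter_upwards [self_mem_nhdsWithin] with p hp
    rw [← ha, mul_zero]
    exact hp.1 a
  · have hlim : Tendsto (fun p : 𝒳 → ℝ => p a) (𝓝[stdSimplex ℝ 𝒳] p₀) (𝓝 (p₀ a)) :=
      (continuous_apply a).continuousWithinAt
    exact hlim.eventually_const_le (mul_lt_of_lt_one_left ha ht)

lemma lowerSemicontinuousOn_essInfKL (hQ : ∀ σ, Q σ ∈ stdSimplex ℝ 𝒳)
    (hpos : ∀ σ a, 0 < Q σ a) : LowerSemicontinuousOn (essInfKL v Q) (stdSimplex ℝ 𝒳) := by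
  intro p₀ hp₀ y hy
  obtain ⟨t, hty, ht0, ht1⟩ : ∃ t : ℝ,
      y < negEntropy p₀ + t * (essInfKL v Q p₀ - negEntropy p₀) ∧ 0 < t ∧ t < 1 := by
    have hcont : Continuous fun t : ℝ => negEntropy p₀ + t * (essInfKL v Q p₀ - negEntropy p₀) := by
      fun_prop
    have hnear : ∀ᶠ t in 𝓝[<] (1 : ℝ),
        y < negEntropy p₀ + t * (essInfKL v Q p₀ - negEntropy p₀) :=
      (hcont.tendsto 1).eventually_const_lt (by simpa using hy) |>.filter_mono nhdsWithin_le_nhds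
    exact (hnear.and (Ioo_mem_nhdsLT one_pos)).exists
  have hlim : ∀ᶠ p in 𝓝[stdSimplex ℝ 𝒳] p₀,
      y < negEntropy p + t * (essInfKL v Q p₀ - negEntropy p₀) :=
    ((continuous_negEntropy.add continuous_const).tendsto p₀).eventually_const_lt hty
      |>.filter_mono nhdsWithin_le_nhds
  filter_upwards [hlim, eventually_forall_mul_le_of_lt_one hp₀ ht1] with p hyp hle
  exact hyp.trans_le (negEntropy_add_mul_le_essInfKL hQ hpos hp₀ ht0.le hle)

lemma measurable_essInfKL_comp {Θ : Type*} [MeasurableSpace Θ] {P : Θ → 𝒳 → ℝ}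
    (hQ : ∀ σ, Q σ ∈ stdSimplex ℝ 𝒳) (hpos : ∀ σ a, 0 < Q σ a) (hPm : Measurable P)
    (hP : ∀ θ, P θ ∈ stdSimplex ℝ 𝒳) : Measurable fun θ => essInfKL v Q (P θ) := by
  have hlsc : LowerSemicontinuous ((stdSimplex ℝ 𝒳).domRestrict (essInfKL v Q)) :=
    lowerSemicontinuous_restrict_iff.2 (lowerSemicontinuousOn_essInfKL hQ hpos)
  have hmk : Measurable fun θ => (⟨P θ, hP θ⟩ : stdSimplex ℝ 𝒳) := hPm.subtype_mk
  simpa only [Function.comp_def, Set.domRestrict_apply] using hlsc.measurable.comp hmk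

end EssInfKL

section Direct

variable {𝒳 Λ : Type*} [Fintype 𝒳] [MeasurableSpace Λ] {v : Measure Λ} {Q : Λ → 𝒳 → ℝ}
  {n : ℕ} {r : ℝ}

/-- The acceptance region of the universal test: the words whose empirical distribution has
essential divergence at least `r` from the alternative. -/
def essInfKLRegion (v : Measure Λ) (Q : Λ → 𝒳 → ℝ) (r : ℝ) (n : ℕ) : Set (Fin n → 𝒳) :=
  {x | r ≤ essInfKL v Q (empirical x)}

lemma tendsto_prob_productDist_compl_essInfKLRegion [NeZero v]
    (hQ : ∀ σ, Q σ ∈ stdSimplex ℝ 𝒳) (hpos : ∀ σ a, 0 < Q σ a) {p : 𝒳 → ℝ}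
    (hp : p ∈ stdSimplex ℝ 𝒳) (hr : r < essInfKL v Q p) :
    Tendsto (fun n => prob (productDist p n) (essInfKLRegion v Q r n)ᶜ) atTop (𝓝 0) :=
  tendsto_prob_productDist_empirical_notMem (U := {p' | r ≤ essInfKL v Q p'}) hp <|
    (lowerSemicontinuousOn_essInfKL hQ hpos p hp r hr).mono fun _ => le_of_lt

lemma productDist_le_exp_mul_productDist_empirical {q : 𝒳 → ℝ} (hn : n ≠ 0) (hq : ∀ a, 0 < q a)
    {x : Fin n → 𝒳} (hr : r ≤ KL (empirical x) q) :
    productDist q n x ≤ Real.exp (-(n * r)) * productDist (empirical x) n x := by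
  have hchange : productDist (empirical x) n x =
      Real.exp (n * KL (empirical x) q) * productDist q n x :=
    productDist_eq_exp_sum_empirical_mul hn (empirical_apply_pos x) fun i => hq (x i)
  have hexp : 1 ≤ Real.exp (-(n * r)) * Real.exp (n * KL (empirical x) q) := by
    rw [← Real.exp_add, Real.one_le_exp_iff, neg_add_eq_sub, sub_nonneg]
    exact mul_le_mul_of_nonneg_left hr n.cast_nonneg
  rw [hchange, ← mul_assoc]
  exact le_mul_of_one_le_left (productDist_nonneg (fun a => (hq a).le) x) hexp

variable [IsProbabilityMeasure v]

lemma mixedSource_le_exp_mul_productDist_empirical (hQm : Measurable Q)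
    (hQ : ∀ σ, Q σ ∈ stdSimplex ℝ 𝒳) (hpos : ∀ σ a, 0 < Q σ a) (hn : n ≠ 0) {x : Fin n → 𝒳}
    (hx : x ∈ essInfKLRegion v Q r n) :
    mixedSource v Q n x ≤ Real.exp (-(n * r)) * productDist (empirical x) n x := by
  have hae : ∀ᵐ σ ∂v, productDist (Q σ) n x ≤
      Real.exp (-(n * r)) * productDist (empirical x) n x :=
    (ae_essInfKL_le hQ hpos (empirical_mem_stdSimplex hn x)).mono fun σ hσ =>
      productDist_le_exp_mul_productDist_empirical hn (hpos σ) (le_trans hx hσ)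
  have h := integral_mono_ae (integrable_productDist hQm hQ x) (integrable_const _) hae
  rwa [integral_const, probReal_univ, one_smul] at h

lemma typeII_essInfKLRegion_le (hQm : Measurable Q) (hQ : ∀ σ, Q σ ∈ stdSimplex ℝ 𝒳)
    (hpos : ∀ σ a, 0 < Q σ a) (hn : n ≠ 0) :
    typeII (mixedSource v Q) (essInfKLRegion v Q r) n ≤
      Real.exp (-(n * r)) * ((n : ℝ) + 1) ^ Fintype.card 𝒳 :=
  (prob_le_mul_sum (Real.exp_pos _).le (fun x => productDist_nonneg (empirical_nonneg x) x)
    fun _ hx => mixedSource_le_exp_mul_productDist_empirical hQm hQ hpos hn hx).trans <|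
      mul_le_mul_of_nonneg_left (sum_productDist_empirical_le hn) (Real.exp_pos _).le

lemma eventually_add_one_pow_le_exp_mul (k : ℕ) {δ : ℝ} (hδ : 0 < δ) :
    ∀ᶠ n : ℕ in atTop, ((n : ℝ) + 1) ^ k ≤ Real.exp (n * δ) := by
  have hshift : Tendsto (fun n : ℕ => (n : ℝ) + 1) atTop atTop :=
    tendsto_natCast_atTop_atTop.atTop_add tendsto_const_nhds
  filter_upwards [hshift.eventually <|
    (isLittleO_pow_exp_pos_mul_atTop (k := k) hδ).bound (Real.exp_pos (-δ))] with n hn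
  rw [Real.norm_of_nonneg (by positivity), Real.norm_of_nonneg (Real.exp_pos _).le,
    ← Real.exp_add] at hn
  exact hn.trans_eq (congrArg _ (by ring))

lemma eventually_typeII_essInfKLRegion_le_exp (hQm : Measurable Q)
    (hQ : ∀ σ, Q σ ∈ stdSimplex ℝ 𝒳) (hpos : ∀ σ a, 0 < Q σ a) {r' : ℝ} (hr : r' < r) :
    ∀ᶠ n : ℕ in atTop,
      typeII (mixedSource v Q) (essInfKLRegion v Q r) n ≤ Real.exp (-(n * r')) := by
  filter_upwards [eventually_ne_atTop 0,
    eventually_add_one_pow_le_exp_mul (Fintype.card 𝒳) (sub_pos.2 hr)] with n hn hpoly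
  calc typeII (mixedSource v Q) (essInfKLRegion v Q r) n
      ≤ Real.exp (-(n * r)) * ((n : ℝ) + 1) ^ Fintype.card 𝒳 :=
        typeII_essInfKLRegion_le hQm hQ hpos hn
    _ ≤ Real.exp (-(n * r)) * Real.exp (n * (r - r')) :=
        mul_le_mul_of_nonneg_left hpoly (Real.exp_pos _).le
    _ = Real.exp (-(n * r')) := by
        rw [← Real.exp_add]
        ring_nf

end Direct

section Converse

variable {𝒳 Λ : Type*} [MeasurableSpace Λ] {v : Measure Λ} {Q : Λ → 𝒳 → ℝ} {n : ℕ}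
  {p : 𝒳 → ℝ} {r : ℝ}

lemma exists_mem_forall_mem_nhds_measure_preimage_pos {E : Type*} [TopologicalSpace E]
    [SecondCountableTopology E] (f : Λ → E) {s : Set Λ} (hs : v s ≠ 0) :
    ∃ σ ∈ s, ∀ V ∈ 𝓝 (f σ), 0 < v (f ⁻¹' V) := by
  let _ : TopologicalSpace Λ := .induced f inferInstance
  have _ : SecondCountableTopology Λ := TopologicalSpace.secondCountableTopology_induced Λ E f
  obtain ⟨σ, hσ, hnhds⟩ := exists_mem_forall_mem_nhdsWithin_pos_measure hs
  refine ⟨σ, hσ, fun V hV => hnhds _ (nhdsWithin_le_nhds ?_)⟩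
  rw [nhds_induced]
  exact preimage_mem_comap hV

variable [Fintype 𝒳]

lemma eventually_sum_mul_log_div_lt {q : 𝒳 → ℝ} (hq : ∀ a, 0 < q a) (hr : KL p q < r) :
    ∀ᶠ z in 𝓝 p ×ˢ 𝓝 q, ∑ a, z.1 a * Real.log (p a / z.2 a) < r := by
  rw [← nhds_prod_eq]
  refine Tendsto.eventually_lt_const hr (tendsto_finsetSum _ fun a _ => ?_)
  rcases eq_or_ne (p a) 0 with ha | ha
  · simp [ha]
  · have hdiv : ContinuousAt (fun z : (𝒳 → ℝ) × (𝒳 → ℝ) => p a / z.2 a) (p, q) :=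
      continuousAt_const.div (by fun_prop) (hq a).ne'
    have hfst : ContinuousAt (fun z : (𝒳 → ℝ) × (𝒳 → ℝ) => z.1 a) (p, q) := by fun_prop
    exact hfst.mul (hdiv.log (div_ne_zero ha (hq a).ne'))

lemma exists_nhds_measure_pos_sum_mul_log_div_lt [IsFiniteMeasure v] [NeZero v]
    (hQm : Measurable Q) (hpos : ∀ σ a, 0 < Q σ a) (hr : essInfKL v Q p < r) :
    ∃ U ∈ 𝓝 p, ∃ S, MeasurableSet S ∧ 0 < v.real S ∧
      ∀ p' ∈ U, ∀ σ ∈ S, ∑ a, p' a * Real.log (p a / Q σ a) < r := by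
  obtain ⟨σ₀, hσ₀, hnhds⟩ :=
    exists_mem_forall_mem_nhds_measure_preimage_pos Q (measure_KL_lt_ne_zero hr)
  obtain ⟨U, hU, V, hV, hUV⟩ :=
    mem_prod_iff.1 (eventually_sum_mul_log_div_lt (hpos σ₀) hσ₀)
  obtain ⟨W, hWV, hWopen, hWmem⟩ := mem_nhds_iff.1 hV
  exact ⟨U, hU, Q ⁻¹' W, hQm hWopen.measurableSet,
    ENNReal.toReal_pos (hnhds W (hWopen.mem_nhds hWmem)).ne' (measure_ne_top v _),
    fun p' hp' σ hσ => hUV (Set.mk_mem_prod hp' (hWV hσ))⟩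

lemma productDist_le_exp_mul_productDist {q : 𝒳 → ℝ} (hp : ∀ a, 0 ≤ p a) (hq : ∀ a, 0 < q a)
    (hn : n ≠ 0) {x : Fin n → 𝒳} (hr : ∑ a, empirical x a * Real.log (p a / q a) ≤ r) :
    productDist p n x ≤ Real.exp (n * r) * productDist q n x := by
  have hq_nonneg : 0 ≤ productDist q n x := productDist_nonneg (fun a => (hq a).le) x
  by_cases hzero : ∃ i, p (x i) = 0
  · obtain ⟨i, hi⟩ := hzero
    rw [productDist, Finset.prod_eq_zero (Finset.mem_univ i) hi]
    exact mul_nonneg (Real.exp_pos _).le hq_nonneg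
  · rw [productDist_eq_exp_sum_empirical_mul hn
      (fun i => (hp (x i)).lt_of_ne' fun hi => hzero ⟨i, hi⟩) fun i => hq (x i)]
    gcongr

lemma measureReal_mul_productDist_le_exp_mul_mixedSource [IsFiniteMeasure v] (hQm : Measurable Q)
    (hQ : ∀ σ, Q σ ∈ stdSimplex ℝ 𝒳) (hpos : ∀ σ a, 0 < Q σ a) (hp : ∀ a, 0 ≤ p a) (hn : n ≠ 0)
    {S : Set Λ} (hS : MeasurableSet S) {x : Fin n → 𝒳}
    (hx : ∀ σ ∈ S, ∑ a, empirical x a * Real.log (p a / Q σ a) ≤ r) :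
    v.real S * productDist p n x ≤ Real.exp (n * r) * mixedSource v Q n x := by
  have hint := (integrable_productDist (μ := v) hQm hQ x).const_mul (Real.exp (n * r))
  calc v.real S * productDist p n x = ∫ _ in S, productDist p n x ∂v := by
        rw [setIntegral_const, smul_eq_mul]
    _ ≤ ∫ σ in S, Real.exp (n * r) * productDist (Q σ) n x ∂v :=
        setIntegral_mono_on integrableOn_const hint.integrableOn hS fun σ hσ =>
          productDist_le_exp_mul_productDist hp (hpos σ) hn (hx σ hσ)
    _ ≤ ∫ σ, Real.exp (n * r) * productDist (Q σ) n x ∂v :=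
        setIntegral_le_integral hint <| .of_forall fun σ =>
          mul_nonneg (Real.exp_pos _).le (productDist_nonneg (hQ σ).1 x)
    _ = Real.exp (n * r) * mixedSource v Q n x := integral_const_mul _ _

lemma prob_productDist_le_prob_empirical_notMem_add [IsFiniteMeasure v] (hQm : Measurable Q)
    (hQ : ∀ σ, Q σ ∈ stdSimplex ℝ 𝒳) (hpos : ∀ σ a, 0 < Q σ a) (hp : ∀ a, 0 ≤ p a) (hn : n ≠ 0)
    {S : Set Λ} (hS : MeasurableSet S) (hvS : 0 < v.real S) {U : Set (𝒳 → ℝ)}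
    (hUS : ∀ p' ∈ U, ∀ σ ∈ S, ∑ a, p' a * Real.log (p a / Q σ a) < r) (A : Set (Fin n → 𝒳)) :
    prob (productDist p n) A ≤ prob (productDist p n) {x | empirical x ∉ U} +
      Real.exp (n * r) / v.real S * prob (mixedSource v Q n) A := by
  refine prob_le_prob_add_mul_prob (by positivity) (productDist_nonneg hp)
    (mixedSource_nonneg fun σ => (hQ σ).1) fun x hx => ?_
  rw [div_mul_eq_mul_div, le_div_iff₀' hvS]
  exact measureReal_mul_productDist_le_exp_mul_mixedSource hQm hQ hpos hp hn hS
    fun σ hσ => (hUS _ (not_not.1 hx) σ hσ).le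

lemma tendsto_prob_productDist_of_typeII_le_exp [IsFiniteMeasure v] [NeZero v]
    (hQm : Measurable Q) (hQ : ∀ σ, Q σ ∈ stdSimplex ℝ 𝒳) (hpos : ∀ σ a, 0 < Q σ a)
    (hp : p ∈ stdSimplex ℝ 𝒳) (hr : essInfKL v Q p < r) {A : (n : ℕ) → Set (Fin n → 𝒳)}
    (hA : ∀ᶠ n : ℕ in atTop, typeII (mixedSource v Q) A n ≤ Real.exp (-(n * r))) :
    Tendsto (fun n => prob (productDist p n) (A n)) atTop (𝓝 0) := by
  obtain ⟨r', hr', hr'r⟩ := exists_between hr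
  obtain ⟨U, hU, S, hS, hvS, hUS⟩ := exists_nhds_measure_pos_sum_mul_log_div_lt hQm hpos hr'
  have hbound : ∀ᶠ n : ℕ in atTop, prob (productDist p n) (A n) ≤
      prob (productDist p n) {x | empirical x ∉ U} + Real.exp (-(n * (r - r'))) / v.real S := by
    filter_upwards [eventually_ne_atTop 0, hA] with n hn hAn
    refine (prob_productDist_le_prob_empirical_notMem_add hQm hQ hpos hp.1 hn hS hvS hUS
      (A n)).trans (add_le_add_right ?_ _)
    have hsplit : -((n : ℝ) * (r - r')) = n * r' + -(n * r) := by ring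
    rw [hsplit, Real.exp_add, mul_div_right_comm]
    exact mul_le_mul_of_nonneg_left hAn (by positivity)
  have hexp_lim : Tendsto (fun n : ℕ => Real.exp (-(n * (r - r'))) / v.real S) atTop (𝓝 0) := by
    have hlim : Tendsto (fun n : ℕ => (n : ℝ) * (r - r')) atTop atTop :=
      tendsto_natCast_atTop_atTop.atTop_mul_const (sub_pos.2 hr'r)
    simpa using (Real.tendsto_exp_neg_atTop_nhds_zero.comp hlim).div_const (v.real S)
  refine squeeze_zero' (.of_forall fun n => prob_nonneg (productDist_nonneg hp.1) _) hbound ?_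
  simpa using (tendsto_prob_productDist_empirical_notMem hp
    (mem_nhdsWithin_of_mem_nhds hU)).add hexp_lim

end Converse

section Mixing

variable {𝒳 Θ : Type*} [Fintype 𝒳] [MeasurableSpace Θ] {w : Measure Θ} {P : Θ → 𝒳 → ℝ}
  {A : (n : ℕ) → Set (Fin n → 𝒳)} {B : Set Θ}

lemma tendsto_setIntegral_prob_productDist [IsFiniteMeasure w] (hPm : Measurable P)
    (hP : ∀ θ, P θ ∈ stdSimplex ℝ 𝒳) (hB : MeasurableSet B)
    (hlim : ∀ θ ∈ B, Tendsto (fun n => prob (productDist (P θ) n) (A n)) atTop (𝓝 0)) :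
    Tendsto (fun n => ∫ θ in B, prob (productDist (P θ) n) (A n) ∂w) atTop (𝓝 0) := by
  rw [← integral_zero Θ ℝ (μ := w.restrict B)]
  refine tendsto_integral_of_dominated_convergence (fun _ => 1)
    (fun n => (measurable_prob_productDist hPm (A n)).aestronglyMeasurable) (integrable_const _)
    (fun n => .of_forall fun θ => ?_) (ae_restrict_of_forall_mem hB hlim)
  rw [Real.norm_of_nonneg (prob_nonneg (productDist_nonneg (hP θ).1) _)]
  exact prob_productDist_le_one (hP θ) _

lemma eventually_prob_mixedSource_lt [IsFiniteMeasure w] (hPm : Measurable P)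
    (hP : ∀ θ, P θ ∈ stdSimplex ℝ 𝒳) (hB : MeasurableSet B)
    (hlim : ∀ θ ∈ B, Tendsto (fun n => prob (productDist (P θ) n) (A n)) atTop (𝓝 0)) {c : ℝ}
    (hc : w.real Bᶜ < c) : ∀ᶠ n in atTop, prob (mixedSource w P n) (A n) < c := by
  filter_upwards [(tendsto_setIntegral_prob_productDist (w := w) hPm hP hB hlim).eventually_lt_const
    (sub_pos.2 hc)] with n hn
  have hint := integrable_prob_productDist (μ := w) hPm hP (A n)
  have hcompl : ∫ θ in Bᶜ, prob (productDist (P θ) n) (A n) ∂w ≤ w.real Bᶜ := by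
    have h := setIntegral_mono (s := Bᶜ) hint.integrableOn (integrable_const 1).integrableOn
      fun θ => prob_productDist_le_one (hP θ) (A n)
    simpa using h
  rw [prob_mixedSource hPm hP, ← integral_add_compl hB hint]
  linarith

lemma typeI_mixedSource_nonneg (hP : ∀ θ, P θ ∈ stdSimplex ℝ 𝒳) (n : ℕ) :
    0 ≤ typeI (mixedSource w P) A n :=
  prob_nonneg (mixedSource_nonneg fun θ => (hP θ).1) _

lemma nonempty_of_typeI_mixedSource_lt_one [IsProbabilityMeasure w] (hPm : Measurable P)
    (hP : ∀ θ, P θ ∈ stdSimplex ℝ 𝒳) {n : ℕ} (h : typeI (mixedSource w P) A n < 1) :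
    (A n).Nonempty := by
  rw [Set.nonempty_iff_ne_empty]
  intro hempty
  rw [typeI, prob_mixedSource_compl hPm hP, hempty] at h
  simp [prob] at h

end Mixing

section Exponent

variable {𝒳 Θ Λ : Type*} [Fintype 𝒳] [MeasurableSpace Θ] [MeasurableSpace Λ]
  {w : Measure Θ} [IsProbabilityMeasure w] {v : Measure Λ} [IsProbabilityMeasure v]
  {P : Θ → 𝒳 → ℝ} {Q : Λ → 𝒳 → ℝ} {ε r R : ℝ}

lemma eventually_typeI_essInfKLRegion_lt (hPm : Measurable P) (hP : ∀ θ, P θ ∈ stdSimplex ℝ 𝒳)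
    (hQ : ∀ σ, Q σ ∈ stdSimplex ℝ 𝒳) (hpos : ∀ σ a, 0 < Q σ a)
    (hR : w.real {θ | essInfKL v Q (P θ) < R} ≤ ε) (hr : r < R) {c : ℝ} (hc : ε < c) :
    ∀ᶠ n in atTop, typeI (mixedSource w P) (essInfKLRegion v Q r) n < c := by
  have hB : MeasurableSet {θ | R ≤ essInfKL v Q (P θ)} :=
    measurableSet_le measurable_const (measurable_essInfKL_comp hQ hpos hPm hP)
  refine eventually_prob_mixedSource_lt hPm hP hB (fun θ hθ =>
    tendsto_prob_productDist_compl_essInfKLRegion hQ hpos (hP θ) (hr.trans_le hθ)) ?_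
  simpa only [Set.compl_ofPred, not_le] using hR.trans_lt hc

lemma isBoundedUnder_le_typeIIExponent (hQm : Measurable Q) (hQ : ∀ σ, Q σ ∈ stdSimplex ℝ 𝒳)
    (hpos : ∀ σ a, 0 < Q σ a) (A : (n : ℕ) → Set (Fin n → 𝒳)) :
    IsBoundedUnder (· ≤ ·) atTop (typeIIExponent (mixedSource v Q) A) :=
  isBoundedUnder_of ⟨_, typeIIExponent_mixedSource_le hQm hQ hpos A⟩

theorem epsAchievable_of_lt (hPm : Measurable P) (hP : ∀ θ, P θ ∈ stdSimplex ℝ 𝒳)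
    (hQm : Measurable Q) (hQ : ∀ σ, Q σ ∈ stdSimplex ℝ 𝒳) (hpos : ∀ σ a, 0 < Q σ a) (hε : ε < 1)
    (hR : w.real {θ | essInfKL v Q (P θ) < R} ≤ ε) (hr : r < R) :
    EpsAchievable (mixedSource w P) (mixedSource v Q) ε r := by
  obtain ⟨s, hrs, hsR⟩ := exists_between hr
  have htypeI {c : ℝ} (hc : ε < c) :=
    eventually_typeI_essInfKLRegion_lt hPm hP hQ hpos hR hsR hc
  refine ⟨essInfKLRegion v Q s, le_of_forall_gt_imp_ge_of_dense fun c hc => ?_, ?_⟩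
  · exact limsup_le_of_le
      (isBoundedUnder_of ⟨0, typeI_mixedSource_nonneg hP⟩).isCoboundedUnder_le
      ((htypeI hc).mono fun _ => le_of_lt)
  · refine le_liminf_of_le
      (isBoundedUnder_le_typeIIExponent hQm hQ hpos _).isCoboundedUnder_ge ?_
    filter_upwards [eventually_ne_atTop 0, htypeI hε,
      eventually_typeII_essInfKLRegion_le_exp (v := v) hQm hQ hpos hrs] with n hn hI hII
    have hne := nonempty_of_typeI_mixedSource_lt_one hPm hP hI
    exact (le_typeIIExponent_iff hn (typeII_mixedSource_pos hQm hQ hpos hne) r).2 hII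

theorem measureReal_essInfKL_lt_le_of_epsAchievable (hPm : Measurable P)
    (hP : ∀ θ, P θ ∈ stdSimplex ℝ 𝒳) (hQm : Measurable Q) (hQ : ∀ σ, Q σ ∈ stdSimplex ℝ 𝒳)
    (hpos : ∀ σ a, 0 < Q σ a) (hR : EpsAchievable (mixedSource w P) (mixedSource v Q) ε R)
    (hr : r < R) : w.real {θ | essInfKL v Q (P θ) < r} ≤ ε := by
  obtain ⟨A, hI, hII⟩ := hR
  have hB : MeasurableSet {θ | essInfKL v Q (P θ) < r} :=
    measurableSet_lt (measurable_essInfKL_comp hQ hpos hPm hP) measurable_const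
  have htypeII : ∀ᶠ n : ℕ in atTop, typeII (mixedSource v Q) A n ≤ Real.exp (-(n * r)) := by
    have hexponent : ∀ᶠ n in atTop, r < typeIIExponent (mixedSource v Q) A n :=
      eventually_lt_of_lt_liminf (hr.trans_le hII)
        (isBoundedUnder_of ⟨0, typeIIExponent_mixedSource_nonneg hQm hQ A⟩)
    filter_upwards [eventually_ne_atTop 0, hexponent] with n hn hrn
    exact typeII_le_exp_of_le_typeIIExponent hn
      (prob_nonneg (mixedSource_nonneg fun σ => (hQ σ).1) _) hrn.le
  refine le_of_forall_lt_imp_le_of_dense fun c hc => le_trans ?_ hI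
  have haccept : ∀ᶠ n in atTop, prob (mixedSource w P n) (A n) < 1 - c := by
    refine eventually_prob_mixedSource_lt hPm hP hB (fun θ hθ =>
      tendsto_prob_productDist_of_typeII_le_exp hQm hQ hpos (hP θ) hθ htypeII) ?_
    rw [probReal_compl_eq_one_sub hB]
    exact sub_lt_sub_left hc 1
  refine le_limsup_of_frequently_le (haccept.mono fun n hn => ?_).frequently
    (isBoundedUnder_of ⟨1, fun n => prob_mixedSource_le_one hPm hP _⟩)
  rw [typeI, prob_mixedSource_compl hPm hP]
  linarith

lemma bddAbove_epsAchievable {X : (n : ℕ) → (Fin n → 𝒳) → ℝ} (hQm : Measurable Q)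
    (hQ : ∀ σ, Q σ ∈ stdSimplex ℝ 𝒳) (hpos : ∀ σ a, 0 < Q σ a) :
    BddAbove {R | EpsAchievable X (mixedSource v Q) ε R} := by
  refine ⟨-Real.log (∫ σ, ∏ a, Q σ a ∂v), ?_⟩
  rintro R ⟨A, -, hR⟩
  exact hR.trans <| liminf_le_of_frequently_le
    (Frequently.of_forall (typeIIExponent_mixedSource_le hQm hQ hpos A))
    (isBoundedUnder_of ⟨0, typeIIExponent_mixedSource_nonneg hQm hQ A⟩)

lemma csSup_eq_csSup_of_forall_lt_mem {α : Type*} [ConditionallyCompleteLinearOrder α]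
    [DenselyOrdered α] [NoMinOrder α] {S T : Set α} (hS : S.Nonempty) (hT : BddAbove T)
    (hST : ∀ R ∈ S, ∀ r < R, r ∈ T) (hTS : ∀ R ∈ T, ∀ r < R, r ∈ S) : sSup S = sSup T := by
  have hub : upperBounds S = upperBounds T := by
    ext b
    exact ⟨fun hb R hR => le_of_forall_lt_imp_le_of_dense fun r hr => hb (hTS R hR r hr),
      fun hb R hR => le_of_forall_lt_imp_le_of_dense fun r hr => hb (hST R hR r hr)⟩
  obtain ⟨R, hR⟩ := hS
  have hTne : T.Nonempty := (exists_lt R).imp (hST R hR)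
  have hlub : IsLUB S (sSup T) := by
    rw [IsLUB, hub]
    exact isLUB_csSup hTne hT
  exact hlub.csSup_eq ⟨R, hR⟩

theorem stmt_12_general (hPm : Measurable P) (hP : ∀ θ, P θ ∈ stdSimplex ℝ 𝒳)
    (hQm : Measurable Q) (hQ : ∀ σ, Q σ ∈ stdSimplex ℝ 𝒳) (hpos : ∀ σ a, 0 < Q σ a)
    (hε0 : 0 ≤ ε) (hε1 : ε < 1) :
    Beps (mixedSource w P) (mixedSource v Q) ε =
      sSup {R : ℝ | w.real {θ | essInf (fun σ => KL (P θ) (Q σ)) v < R} ≤ ε} := by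
  have hzero : w.real {θ | essInfKL v Q (P θ) < 0} ≤ ε := by
    simpa [(essInfKL_nonneg hQ hpos (hP _)).not_gt] using hε0
  refine Eq.symm <|
    csSup_eq_csSup_of_forall_lt_mem ⟨0, hzero⟩ (bddAbove_epsAchievable hQm hQ hpos) ?_ ?_
  · exact fun R hR r hr => epsAchievable_of_lt hPm hP hQm hQ hpos hε1 hR hr
  · exact fun R hR r hr =>
      measureReal_essInfKL_lt_le_of_epsAchievable hPm hP hQm hQ hpos hR hr

end Exponent

/-- **Theorem (first-order `ε`-optimum exponent when both hypotheses are mixed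
memoryless):** with a compact alternative mixing space `Σ`, a continuous family
`σ ↦ P̄_σ` of everywhere-positive distributions, and `σ(·)` attaining the
`v`-essential infimum `v-ess inf_σ D(P‖P̄_σ)`, one has
`B_ε(X‖X̄) = sup{ R : w({θ : D(P_θ‖P̄_{σ(P_θ)}) < R}) ≤ ε }`. -/
theorem stmt_12 {𝒳 Θ Λ : Type*} [Fintype 𝒳] [MeasurableSpace Θ]
    [TopologicalSpace Λ] [CompactSpace Λ] [MeasurableSpace Λ] [BorelSpace Λ]
    (w : Measure Θ) [IsProbabilityMeasure w]
    (v : Measure Λ) [IsProbabilityMeasure v]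
    (P : Θ → 𝒳 → ℝ)
    (hmeas : ∀ x : 𝒳, Measurable fun θ => P θ x)
    (hdist : ∀ θ, (∀ x, 0 ≤ P θ x) ∧ (∑ x, P θ x) = 1)
    (Pbar : Λ → 𝒳 → ℝ)
    (hcont : ∀ x : 𝒳, Continuous fun σ => Pbar σ x)
    (hbardist : ∀ σ, (∀ x, 0 < Pbar σ x) ∧ (∑ x, Pbar σ x) = 1)
    (sigma : (𝒳 → ℝ) → Λ)
    (hsigma : ∀ p : 𝒳 → ℝ, (∀ x, 0 ≤ p x) → (∑ x, p x) = 1 →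
      KL p (Pbar (sigma p)) =
        sSup {β : ℝ | v {σ | KL p (Pbar σ) < β} = 0})
    (ε : ℝ) (hε0 : 0 ≤ ε) (hε1 : ε < 1) :
    Beps (fun n x => ∫ θ, (∏ i, P θ (x i)) ∂w)
        (fun n x => ∫ σ, (∏ i, Pbar σ (x i)) ∂v) ε =
      sSup {R : ℝ | (w {θ | KL (P θ) (Pbar (sigma (P θ))) < R}).toReal ≤ ε} := by
  have hessInf : ∀ θ, KL (P θ) (Pbar (sigma (P θ))) = essInf (fun σ => KL (P θ) (Pbar σ)) v :=
    fun θ => (hsigma (P θ) (hdist θ).1 (hdist θ).2).trans (essInf_eq_sSup v _).symm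
  simp only [hessInf]
  exact stmt_12_general (measurable_pi_iff.2 hmeas) hdist
    (measurable_pi_iff.2 fun x => (hcont x).measurable)
    (fun σ => ⟨fun x => ((hbardist σ).1 x).le, (hbardist σ).2⟩) (fun σ => (hbardist σ).1) hε0 hε1
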